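/- Let Y be an irreducible Stein space, ψ a real analytic strongly plurisubharmonic exhaustion function on Y, X = {y ∈ Y : ψ(y) < c} for some c ∈ ℝ, and let A ⊆ X be relatively compact in X. Then for every x₀ ∈ ∂X one has lim_{X∋x→x₀} h_{A,X}(x) = 1. -/

import Mathlib

/-!
Common framework: plurisubharmonic functions, (reduced) complex spaces modeled by
charts onto analytic subvarieties of open subsets of finite-dimensional complex
normed spaces, relative extremal functions, pluripolarity, Stein spaces,
Monge–Ampère operators, and crosses in products of complex spaces.
-/

open Set Filter Topology Metric

noncomputable section

/-- `ℂⁿ`, modeled as functions `Fin n → ℂ`. -/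
abbrev Cn (n : ℕ) : Type := Fin n → ℂ

/-- A real-valued function is harmonic on a subset of `ℂ` if it is locally
the real part of a holomorphic function. -/
def HarmonicOnCC (h : ℂ → ℝ) (Ω : Set ℂ) : Prop :=
  ∀ z ∈ Ω, ∃ W : Set ℂ, IsOpen W ∧ z ∈ W ∧ W ⊆ Ω ∧
    ∃ f : ℂ → ℂ, DifferentiableOn ℂ f W ∧ ∀ w ∈ W, h w = (f w).re

/-- Subharmonicity for `[-∞,∞)`-valued functions (modeled as `EReal`-valued, with value
`⊤` excluded in applications): upper semicontinuity together with domination on closed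
discs by harmonic comparison functions. -/
def SubharmonicOnCC (u : ℂ → EReal) (Ω : Set ℂ) : Prop :=
  UpperSemicontinuousOn u Ω ∧
  ∀ (a : ℂ) (r : ℝ), 0 < r → closedBall a r ⊆ Ω →
    ∀ h : ℂ → ℝ, ContinuousOn h (closedBall a r) → HarmonicOnCC h (ball a r) →
      (∀ z ∈ sphere a r, u z ≤ (h z : EReal)) →
      ∀ z ∈ closedBall a r, u z ≤ (h z : EReal)

section NormedE

variable {E : Type*} [NormedAddCommGroup E] [NormedSpace ℂ E]

/-- Plurisubharmonicity on an open subset `Ω` of a complex normed space: the function is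
`< ⊤`, upper semicontinuous, not identically `-∞` on any nonempty open subset (equivalently,
on no irreducible = connected component of `Ω`), and subharmonic along every complex line. -/
def PSHOnE (u : E → EReal) (Ω : Set E) : Prop :=
  (∀ z ∈ Ω, u z < ⊤) ∧ UpperSemicontinuousOn u Ω ∧
  (¬ ∃ U : Set E, U ⊆ Ω ∧ IsOpen U ∧ U.Nonempty ∧ ∀ z ∈ U, u z = ⊥) ∧
  ∀ a b : E, SubharmonicOnCC (fun w : ℂ => u (a + w • b)) {w : ℂ | a + w • b ∈ Ω}

/-- Strong (strict) plurisubharmonicity of a real-valued function: locally, subtracting a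
small multiple of `‖z‖²` preserves plurisubharmonicity. -/
def StronglyPSHOnE (u : E → ℝ) (Ω : Set E) : Prop :=
  ∀ x ∈ Ω, ∃ ε : ℝ, 0 < ε ∧ ∃ U : Set E, IsOpen U ∧ x ∈ U ∧ U ⊆ Ω ∧
    PSHOnE (fun z => ((u z - ε * ‖z‖ ^ 2 : ℝ) : EReal)) U

/-- An analytic subvariety `B` of an open set `V`: locally the common zero locus of
finitely many holomorphic functions. -/
def IsSubvariety (B V : Set E) : Prop :=
  IsOpen V ∧ B ⊆ V ∧
  ∀ z ∈ V, ∃ W : Set E, IsOpen W ∧ z ∈ W ∧ W ⊆ V ∧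
    ∃ (m : ℕ) (F : Fin m → E → ℂ), (∀ i, DifferentiableOn ℂ (F i) W) ∧
      B ∩ W = {w ∈ W | ∀ i, F i w = 0}

end NormedE

/-- A chart `(U, φ, B, V)` of a complex space `X`: a homeomorphism `φ` of an open set
`U ⊆ X` onto an analytic subvariety `B` of an open subset `V` of a finite-dimensional
complex normed space. -/
structure CChart (X : Type*) [TopologicalSpace X] where
  E : Type
  [nacg : NormedAddCommGroup E]
  [nsp : NormedSpace ℂ E]
  [fd : FiniteDimensional ℂ E]
  U : Set X
  V : Set E
  B : Set E
  φ : X → E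
  openU : IsOpen U
  subvariety : IsSubvariety B V
  mapsToB : ∀ x ∈ U, φ x ∈ B
  injOn : Set.InjOn φ U
  image_eq : φ '' U = B
  contOn : ContinuousOn φ U
  open_image : ∀ W : Set X, W ⊆ U → IsOpen W → ∃ V'' : Set E, IsOpen V'' ∧ φ '' W = B ∩ V''

attribute [instance] CChart.nacg CChart.nsp CChart.fd

/-- Holomorphic compatibility of two charts: the transition map extends to a holomorphic
map of ambient open sets near every point of the overlap. -/
def ChartCompat {X : Type*} [TopologicalSpace X] (c d : CChart X) : Prop :=
  ∀ x ∈ c.U ∩ d.U, ∃ W : Set c.E, IsOpen W ∧ c.φ x ∈ W ∧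
    ∃ F : c.E → d.E, DifferentiableOn ℂ F W ∧
      ∀ y ∈ c.U ∩ d.U, c.φ y ∈ W → F (c.φ y) = d.φ y

/-- A (reduced) complex space structure on a topological space `X`: an atlas of pairwise
holomorphically compatible charts onto analytic subvarieties covering `X`. -/
structure CSpace (X : Type*) [TopologicalSpace X] where
  atlas : Set (CChart X)
  chart_cover : ∀ x : X, ∃ c ∈ atlas, x ∈ c.U
  compat : ∀ c ∈ atlas, ∀ d ∈ atlas, ChartCompat c d

section Space

variable {X : Type*} [TopologicalSpace X]

/-- A function `f` is holomorphic on an open subset `D` of the complex space: near every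
point it is, in some chart, the restriction of an ambient holomorphic function. -/
def SpaceHolOn (S : CSpace X) (f : X → ℂ) (D : Set X) : Prop :=
  ∀ x ∈ D, ∃ c ∈ S.atlas, x ∈ c.U ∧ ∃ V' : Set c.E, IsOpen V' ∧ V' ⊆ c.V ∧ c.φ x ∈ V' ∧
    {y ∈ c.U | c.φ y ∈ V'} ⊆ D ∧
    ∃ F : c.E → ℂ, DifferentiableOn ℂ F V' ∧ ∀ y ∈ c.U, c.φ y ∈ V' → F (c.φ y) = f y

/-- A holomorphic map from a subset of `ℂ` into a complex space: continuous, and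
holomorphic when read in any chart. -/
def HolMapTo (S : CSpace X) (f : ℂ → X) (Ω : Set ℂ) : Prop :=
  ContinuousOn f Ω ∧
  ∀ c ∈ S.atlas, DifferentiableOn ℂ (fun w => c.φ (f w)) (Ω ∩ f ⁻¹' c.U)

/-- An analytic subset `A` of an open subset `D` of a complex space: locally (in charts)
cut out in `D` by finitely many holomorphic equations. -/
def IsAnalyticIn (S : CSpace X) (A D : Set X) : Prop :=
  A ⊆ D ∧ ∀ x ∈ D, ∃ c ∈ S.atlas, x ∈ c.U ∧ ∃ V' : Set c.E, IsOpen V' ∧ V' ⊆ c.V ∧ c.φ x ∈ V' ∧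
    ∃ (m : ℕ) (F : Fin m → c.E → ℂ), (∀ i, DifferentiableOn ℂ (F i) V') ∧
      ∀ y ∈ c.U, c.φ y ∈ V' → y ∈ D → (y ∈ A ↔ ∀ i, F i (c.φ y) = 0)

/-- Irreducibility of the open subset `D` of a complex space. -/
def IsIrreducibleIn (S : CSpace X) (D : Set X) : Prop :=
  D.Nonempty ∧ ∀ A₁ A₂ : Set X, IsAnalyticIn S A₁ D → IsAnalyticIn S A₂ D →
    A₁ ∪ A₂ = D → A₁ = D ∨ A₂ = D

/-- An irreducible analytic subset of `D`. -/
def IsIrreducibleAnalyticIn (S : CSpace X) (C D : Set X) : Prop :=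
  IsAnalyticIn S C D ∧ C.Nonempty ∧
  ∀ A₁ A₂ : Set X, IsAnalyticIn S A₁ D → IsAnalyticIn S A₂ D →
    C ⊆ A₁ ∪ A₂ → C ⊆ A₁ ∨ C ⊆ A₂

/-- An irreducible component of `D`: a maximal irreducible analytic subset. -/
def IsIrredComponentIn (S : CSpace X) (C D : Set X) : Prop :=
  IsIrreducibleAnalyticIn S C D ∧
  ∀ C' : Set X, IsIrreducibleAnalyticIn S C' D → C ⊆ C' → C' = C

/-- Local irreducibility (on `D`): every point has arbitrarily small irreducible open
neighborhoods. -/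
def IsLocallyIrreducibleIn (S : CSpace X) (D : Set X) : Prop :=
  ∀ x ∈ D, ∀ W : Set X, IsOpen W → x ∈ W →
    ∃ D' : Set X, IsOpen D' ∧ x ∈ D' ∧ D' ⊆ W ∩ D ∧ IsIrreducibleIn S D'

/-- Plurisubharmonicity of `u : X → [-∞,∞)` on an open subset `D` of a complex space:
`u` is not identically `-∞` on any irreducible component of `D` and, locally in charts,
`u` is the restriction of an ambient plurisubharmonic function. -/
def SpacePSHOn (S : CSpace X) (u : X → EReal) (D : Set X) : Prop :=
  (∀ x ∈ D, u x < ⊤) ∧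
  (∀ C : Set X, IsIrredComponentIn S C D → ∃ x ∈ C, u x ≠ ⊥) ∧
  ∀ x ∈ D, ∃ c ∈ S.atlas, x ∈ c.U ∧ ∃ V' : Set c.E, IsOpen V' ∧ V' ⊆ c.V ∧ c.φ x ∈ V' ∧
    {y ∈ c.U | c.φ y ∈ V'} ⊆ D ∧
    ∃ ψ : c.E → EReal, PSHOnE ψ V' ∧ ∀ y ∈ c.U, c.φ y ∈ V' → ψ (c.φ y) = u y

/-- Real analyticity on an open subset of a complex space, via charts. -/
def SpaceRealAnalyticOn (S : CSpace X) (f : X → ℝ) (D : Set X) : Prop :=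
  ∀ x ∈ D, ∃ c ∈ S.atlas, x ∈ c.U ∧ ∃ V' : Set c.E, IsOpen V' ∧ V' ⊆ c.V ∧ c.φ x ∈ V' ∧
    {y ∈ c.U | c.φ y ∈ V'} ⊆ D ∧
    ∃ g : c.E → ℝ, AnalyticOnNhd ℝ g V' ∧ ∀ y ∈ c.U, c.φ y ∈ V' → g (c.φ y) = f y

/-- Strong plurisubharmonicity on an open subset of a complex space, via charts. -/
def SpaceStronglyPSHOn (S : CSpace X) (f : X → ℝ) (D : Set X) : Prop :=
  ∀ x ∈ D, ∃ c ∈ S.atlas, x ∈ c.U ∧ ∃ V' : Set c.E, IsOpen V' ∧ V' ⊆ c.V ∧ c.φ x ∈ V' ∧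
    {y ∈ c.U | c.φ y ∈ V'} ⊆ D ∧
    ∃ g : c.E → ℝ, StronglyPSHOnE g V' ∧ ∀ y ∈ c.U, c.φ y ∈ V' → g (c.φ y) = f y

/-- `ψ` is an exhaustion function of `D`: all sublevel sets are relatively compact in `D`. -/
def IsExhaustionOn (ψ : X → ℝ) (D : Set X) : Prop :=
  ∀ c : ℝ, IsCompact (closure {x ∈ D | ψ x < c}) ∧ closure {x ∈ D | ψ x < c} ⊆ D

/-- The holomorphically convex hull of `K` with respect to holomorphic functions on the
open set `G`. -/
def holHull (S : CSpace X) (K G : Set X) : Set X :=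
  {x ∈ G | ∀ f : X → ℂ, SpaceHolOn S f G → ‖f x‖ ≤ sSup ((fun y => ‖f y‖) '' K)}

/-- The open subset `G` of the complex space is Stein: holomorphically convex and
holomorphically separable. -/
def IsSteinIn (S : CSpace X) (G : Set X) : Prop :=
  (∀ K : Set X, K ⊆ G → IsCompact K → IsCompact (holHull S K G)) ∧
  ∀ x ∈ G, ∀ y ∈ G, x ≠ y → ∃ f : X → ℂ, SpaceHolOn S f G ∧ f x ≠ f y

/-- All points of `D` are manifold points (charts onto open subsets of complex normed
spaces). -/
def IsManifoldIn (S : CSpace X) (D : Set X) : Prop :=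
  ∀ x ∈ D, ∃ c ∈ S.atlas, x ∈ c.U ∧ c.B = c.V

/-- The function `h_{A,D}` of Definition 2.8 (before regularization). -/
def relExtRaw (S : CSpace X) (A D : Set X) : X → EReal := fun z =>
  ⨆ u ∈ {u : X → EReal | SpacePSHOn S u D ∧ (∀ x ∈ D, u x ≤ 1) ∧ ∀ x ∈ A, u x ≤ 0}, u z

/-- The relative extremal function `h*_{A,D}`: the upper semicontinuous regularization
(within `D`) of `h_{A,D}`. -/
def relExt (S : CSpace X) (A D : Set X) : X → EReal := fun z =>
  limsup (relExtRaw S A D) (𝓝[D] z)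

/-- `P` is (locally) pluripolar in the open set `D`. -/
def IsPluripolarIn (S : CSpace X) (P D : Set X) : Prop :=
  ∀ x ∈ P, ∃ U : Set X, IsOpen U ∧ x ∈ U ∧ U ⊆ D ∧
    ∃ u : X → EReal, SpacePSHOn S u U ∧ ∀ y ∈ P ∩ U, u y = ⊥

/-- `A` is pluriregular at the point `a`. -/
def PluriregularAt (S : CSpace X) (A : Set X) (a : X) : Prop :=
  a ∈ closure A ∧ ∀ U : Set X, IsOpen U → a ∈ U → relExt S (A ∩ U) U a = 0

/-- `A` is locally pluriregular: nonempty and pluriregular at each of its points. -/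
def LocallyPluriregular (S : CSpace X) (A : Set X) : Prop :=
  A.Nonempty ∧ ∀ a ∈ A, PluriregularAt S A a

/-- A Josefson manifold: a complex manifold on which every (locally) pluripolar set is
globally pluripolar. -/
def IsJosefsonManifold (S : CSpace X) : Prop :=
  IsManifoldIn S univ ∧ ∀ P : Set X, IsPluripolarIn S P univ →
    ∃ u : X → EReal, SpacePSHOn S u univ ∧ ∀ x ∈ P, u x = ⊥

/-- Local (two-sided) boundedness of an `EReal`-valued function on `D`. -/
def LocBoundedOn (u : X → EReal) (D : Set X) : Prop :=
  ∀ x ∈ D, ∃ U : Set X, IsOpen U ∧ x ∈ U ∧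
    ∃ m M : ℝ, ∀ y ∈ U ∩ D, (m : EReal) ≤ u y ∧ u y ≤ (M : EReal)

/-- (Global) boundedness of an `EReal`-valued function on `D`. -/
def BoundedOn (u : X → EReal) (D : Set X) : Prop :=
  ∃ m M : ℝ, ∀ y ∈ D, (m : EReal) ≤ u y ∧ u y ≤ (M : EReal)

/-- `E` is locally `L`-regular (in the sense of Zeriahi): each of its points has a basis of
open neighborhoods in which the corresponding relative extremal functions are continuous
and vanish on `E`. -/
def LocallyLRegular (S : CSpace X) (E : Set X) : Prop :=
  ∀ x ∈ E, ∀ W : Set X, IsOpen W → x ∈ W →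
    ∃ U₀ : Set X, IsOpen U₀ ∧ x ∈ U₀ ∧ U₀ ⊆ W ∧
      ContinuousOn (relExt S (E ∩ U₀) U₀) U₀ ∧
      ∀ y ∈ E ∩ U₀, relExt S (E ∩ U₀) U₀ y = 0

end Space

open MeasureTheory

/-! ### The complex Monge–Ampère operator -/

/-- Second directional derivative. -/
def d2 {n : ℕ} (u : Cn n → ℝ) (z v w : Cn n) : ℝ :=
  fderiv ℝ (fun x => fderiv ℝ u x v) z w

/-- The complex Hessian `(∂²u/∂z_j ∂z̄_k)_{j,k}` of a real-valued function on `ℂⁿ`. -/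
def cHess {n : ℕ} (u : Cn n → ℝ) (z : Cn n) : Matrix (Fin n) (Fin n) ℂ :=
  Matrix.of fun j k =>
    (((d2 u z (Pi.single j 1) (Pi.single k 1) +
        d2 u z (Pi.single j Complex.I) (Pi.single k Complex.I) : ℝ) : ℂ) +
      Complex.I * ((d2 u z (Pi.single j 1) (Pi.single k Complex.I) -
        d2 u z (Pi.single j Complex.I) (Pi.single k 1) : ℝ) : ℂ)) / 4

/-- The density of `(dd^c u)^n` for a smooth `u`. -/
def maDensity {n : ℕ} (u : Cn n → ℝ) (z : Cn n) : ℝ :=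
  (4 : ℝ) ^ n * (n.factorial : ℝ) * ((cHess u z).det).re

/-- The Monge–Ampère measure `(dd^c u)^n` of a smooth function on `ℂⁿ`. -/
def smoothMA {n : ℕ} (u : Cn n → ℝ) : Measure (Cn n) :=
  volume.withDensity fun z => ENNReal.ofReal (maDensity u z)

/-- `μ` is the Bedford–Taylor Monge–Ampère measure `(dd^c u)^n` of a locally bounded
plurisubharmonic `u` on the open set `Ω ⊆ ℂⁿ`: `μ` is carried by `Ω` and is the weak-*
limit of the Monge–Ampère measures of any decreasing smooth plurisubharmonic
approximation of `u`. -/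
def IsMAOn {n : ℕ} (u : Cn n → EReal) (Ω : Set (Cn n)) (μ : Measure (Cn n)) : Prop :=
  (∀ A : Set (Cn n), MeasurableSet A → Disjoint A Ω → μ A = 0) ∧
  ∀ v : ℕ → Cn n → ℝ, (∀ j, ContDiff ℝ (⊤ : ℕ∞) (v j)) →
    (∀ j, PSHOnE (fun z => ((v j z : ℝ) : EReal)) Ω) →
    (∀ z ∈ Ω, Antitone fun j => v j z) →
    (∀ z ∈ Ω, Tendsto (fun j => ((v j z : ℝ) : EReal)) atTop (𝓝 (u z))) →
    ∀ f : Cn n → ℝ, Continuous f → HasCompactSupport f → tsupport f ⊆ Ω →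
      Tendsto (fun j => ∫ z, f z ∂(smoothMA (v j))) atTop (𝓝 (∫ z, f z ∂μ))

section SpaceMA

variable {X : Type*} [TopologicalSpace X]

/-- A holomorphic local coordinate system of dimension `n` on a complex space: a
homeomorphism `ρ` of an open `U₀ ⊆ X` onto an open `Ω₀ ⊆ ℂⁿ` which identifies the
holomorphic functions on both sides. -/
def IsLocalCoord (S : CSpace X) (n : ℕ) (U₀ : Set X) (ρ : X → Cn n) (Ω₀ : Set (Cn n)) :
    Prop :=
  IsOpen U₀ ∧ IsOpen Ω₀ ∧ ρ '' U₀ = Ω₀ ∧ InjOn ρ U₀ ∧ ContinuousOn ρ U₀ ∧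
  (∀ W : Set X, W ⊆ U₀ → IsOpen W → IsOpen (ρ '' W)) ∧
  (∀ j : Fin n, SpaceHolOn S (fun x => ρ x j) U₀) ∧
  ∀ f : X → ℂ, SpaceHolOn S f U₀ →
    ∃ F : Cn n → ℂ, DifferentiableOn ℂ F Ω₀ ∧ ∀ x ∈ U₀, F (ρ x) = f x

/-- The set of regular points of dimension `n`. -/
def RegLocus (S : CSpace X) (n : ℕ) : Set X :=
  {x | ∃ (U₀ : Set X) (ρ : X → Cn n) (Ω₀ : Set (Cn n)), IsLocalCoord S n U₀ ρ Ω₀ ∧ x ∈ U₀}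

/-- The open set `D` has pure dimension `n`: its `n`-dimensional regular points are dense
in it and it has regular points of no other dimension. -/
def PureDimensionIn (S : CSpace X) (D : Set X) (n : ℕ) : Prop :=
  D ⊆ closure (RegLocus S n ∩ D) ∧ ∀ k : ℕ, (RegLocus S k ∩ D).Nonempty → k = n

/-- `μ` is the Monge–Ampère measure `(dd^c u)^n` of `u` on the open subset `D` of a
complex space: it is carried by the regular part of `D` (i.e. extended by zero through
the singular set) and corresponds, in every local coordinate system, to the
Monge–Ampère measure in `ℂⁿ`. -/
def IsMAOnSpace [MeasurableSpace X] (S : CSpace X) (n : ℕ) (u : X → EReal) (D : Set X)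
    (μ : Measure X) : Prop :=
  (∀ A : Set X, MeasurableSet A → Disjoint A D → μ A = 0) ∧
  (∀ A : Set X, MeasurableSet A → A ⊆ D → Disjoint A (RegLocus S n) → μ A = 0) ∧
  ∀ (U₀ : Set X) (ρ : X → Cn n) (Ω₀ : Set (Cn n)), IsLocalCoord S n U₀ ρ Ω₀ → U₀ ⊆ D →
    ∃ (uu : Cn n → EReal) (ν : Measure (Cn n)),
      (∀ x ∈ U₀, uu (ρ x) = u x) ∧ IsMAOn uu Ω₀ ν ∧
      ∀ A : Set X, MeasurableSet A → A ⊆ U₀ → μ A = ν (ρ '' A)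

/-- `log` with values in `[-∞, ∞)`. -/
def elog (t : ℝ) : EReal := if t ≤ 0 then ⊥ else ((Real.log t : ℝ) : EReal)

/-- `g` is a parabolic potential on `D`: a nonnegative continuous plurisubharmonic
exhaustion function of `D` such that `log g` is plurisubharmonic and maximal
(`(dd^c log g)^n = 0`) off the zero set of `g`.  A Stein space possessing such a
potential is called weakly parabolic. -/
def WeaklyParabolicIn [MeasurableSpace X] (S : CSpace X) (n : ℕ) (g : X → ℝ) (D : Set X) :
    Prop :=
  (∀ x ∈ D, 0 ≤ g x) ∧ ContinuousOn g D ∧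
  SpacePSHOn S (fun x => ((g x : ℝ) : EReal)) D ∧
  IsExhaustionOn g D ∧
  SpacePSHOn S (fun x => elog (g x)) D ∧
  IsMAOnSpace S n (fun x => elog (g x)) {x ∈ D | g x ≠ 0} (0 : Measure X)

end SpaceMA

/-! ### Products of complex spaces, generalized crosses -/

section Pi

variable {ι : Type*} [Fintype ι] {Z : ι → Type*} [∀ i, TopologicalSpace (Z i)]

/-- Holomorphy of a function on an open subset of a finite product of complex spaces,
via products of charts. -/
def PiHolOn (T : ∀ i, CSpace (Z i)) (f : (∀ i, Z i) → ℂ) (Ω : Set (∀ i, Z i)) : Prop :=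
  ∀ w ∈ Ω, ∃ c : ∀ i, CChart (Z i), (∀ i, c i ∈ (T i).atlas) ∧ (∀ i, w i ∈ (c i).U) ∧
    ∃ V' : Set (∀ i, (c i).E), IsOpen V' ∧ (fun i => (c i).φ (w i)) ∈ V' ∧
      {y : ∀ i, Z i | (∀ i, y i ∈ (c i).U) ∧ (fun i => (c i).φ (y i)) ∈ V'} ⊆ Ω ∧
      ∃ F : (∀ i, (c i).E) → ℂ, DifferentiableOn ℂ F V' ∧
        ∀ y : ∀ i, Z i, (∀ i, y i ∈ (c i).U) → ((fun i => (c i).φ (y i)) ∈ V') →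
          F (fun i => (c i).φ (y i)) = f y

/-- Plurisubharmonicity on an open subset of a finite product of complex spaces, via
products of charts. -/
def PiPSHOn (T : ∀ i, CSpace (Z i)) (u : (∀ i, Z i) → EReal) (Ω : Set (∀ i, Z i)) : Prop :=
  (∀ z ∈ Ω, u z < ⊤) ∧
  (¬ ∃ U : Set (∀ i, Z i), U ⊆ Ω ∧ IsOpen U ∧ U.Nonempty ∧ ∀ z ∈ U, u z = ⊥) ∧
  ∀ w ∈ Ω, ∃ c : ∀ i, CChart (Z i), (∀ i, c i ∈ (T i).atlas) ∧ (∀ i, w i ∈ (c i).U) ∧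
    ∃ V' : Set (∀ i, (c i).E), IsOpen V' ∧ (fun i => (c i).φ (w i)) ∈ V' ∧
      {y : ∀ i, Z i | (∀ i, y i ∈ (c i).U) ∧ (fun i => (c i).φ (y i)) ∈ V'} ⊆ Ω ∧
      ∃ ψ : (∀ i, (c i).E) → EReal, PSHOnE ψ V' ∧
        ∀ y : ∀ i, Z i, (∀ i, y i ∈ (c i).U) → ((fun i => (c i).φ (y i)) ∈ V') →
          ψ (fun i => (c i).φ (y i)) = u y

/-- The function `h_{A,D}` on a product of complex spaces. -/
def PiRelExtRaw (T : ∀ i, CSpace (Z i)) (A D : Set (∀ i, Z i)) : (∀ i, Z i) → EReal :=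
  fun z =>
    ⨆ u ∈ {u : (∀ i, Z i) → EReal |
      PiPSHOn T u D ∧ (∀ x ∈ D, u x ≤ 1) ∧ ∀ x ∈ A, u x ≤ 0}, u z

/-- The relative extremal function `h*_{A,D}` on a product of complex spaces. -/
def PiRelExt (T : ∀ i, CSpace (Z i)) (A D : Set (∀ i, Z i)) : (∀ i, Z i) → EReal :=
  fun z => limsup (PiRelExtRaw T A D) (𝓝[D] z)

/-- Pluripolar subsets of a finite product of complex spaces. -/
def PiPluripolar (T : ∀ i, CSpace (Z i)) (P : Set (∀ i, Z i)) : Prop :=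
  ∀ w ∈ P, ∃ U : Set (∀ i, Z i), IsOpen U ∧ w ∈ U ∧
    ∃ u : (∀ i, Z i) → EReal, PiPSHOn T u U ∧ ∀ y ∈ P ∩ U, u y = ⊥

end Pi

section Cross

variable {N : ℕ} {X : Fin N → Type*}

/-- The number of `1`-entries of `α`; `α ∈ I(N,k)` iff `idxCard α = k`. -/
def idxCard (α : Fin N → Bool) : ℕ := (Finset.univ.filter fun j => α j = true).card

/-- `i_{a,α}`: the point of the product whose coordinates are those of `z` where
`α j = 1` and those of `a` where `α j = 0`. -/
def insertCoords (α : Fin N → Bool) (a : ∀ j : {j : Fin N // α j = false}, X j.1)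
    (z : ∀ j : {j : Fin N // α j = true}, X j.1) : ∀ j, X j :=
  fun j => if h : α j = true then z ⟨j, h⟩ else a ⟨j, Bool.eq_false_iff.mpr h⟩

/-- The projection `a ↦ a_α^0` onto the coordinates with `α j = 0`. -/
def proj0 (α : Fin N → Bool) (w : ∀ j, X j) : ∀ j : {j : Fin N // α j = false}, X j.1 :=
  fun j => w j.1

/-- The set `A_α` (the product of the `A_j` with `α_j = 0`). -/
def piASet (A : ∀ j, Set (X j)) (α : Fin N → Bool) :
    Set (∀ j : {j : Fin N // α j = false}, X j.1) :=
  {a | ∀ j, a j ∈ A j.1}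

/-- The generalized `(N,k)`-cross `T_{N,k}((A_j, X_j)_j, (Σ_α)_α)` (with `D_j = X_j`). -/
def crossT (A : ∀ j, Set (X j)) (k : ℕ)
    (Sig : ∀ α : Fin N → Bool, Set (∀ j : {j : Fin N // α j = false}, X j.1)) :
    Set (∀ j, X j) :=
  {w | ∃ α : Fin N → Bool, idxCard α = k ∧
    (∀ j : {j : Fin N // α j = false}, w j.1 ∈ A j.1) ∧ proj0 α w ∉ Sig α}

variable [∀ j, TopologicalSpace (X j)]

/-- `f ∈ 𝒪_s(T_{N,k})`: separate holomorphy on the generalized `(N,k)`-cross. -/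
def SepHol (S : ∀ j, CSpace (X j)) (A : ∀ j, Set (X j)) (k : ℕ)
    (Sig : ∀ α : Fin N → Bool, Set (∀ j : {j : Fin N // α j = false}, X j.1))
    (f : (∀ j, X j) → ℂ) : Prop :=
  ∀ α : Fin N → Bool, idxCard α = k →
    ∀ a : ∀ j : {j : Fin N // α j = false}, X j.1, a ∈ piASet A α → a ∉ Sig α →
      PiHolOn (fun j : {j : Fin N // α j = true} => S j.1)
        (fun z => f (insertCoords α a z)) univ

/-- `f ∈ 𝒪_s^c(T_{N,k})`: separately holomorphic, and continuous on `A_α \ Σ_α` in the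
remaining variables. -/
def SepHolC (S : ∀ j, CSpace (X j)) (A : ∀ j, Set (X j)) (k : ℕ)
    (Sig : ∀ α : Fin N → Bool, Set (∀ j : {j : Fin N // α j = false}, X j.1))
    (f : (∀ j, X j) → ℂ) : Prop :=
  SepHol S A k Sig f ∧
  ∀ α : Fin N → Bool, idxCard α = k →
    ∀ b : ∀ j : {j : Fin N // α j = true}, X j.1,
      ContinuousOn (fun a : ∀ j : {j : Fin N // α j = false}, X j.1 =>
        f (insertCoords α a b)) (piASet A α \ Sig α)

/-- The envelope `X̂_{N,k}` of the `(N,k)`-cross. -/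
def crossEnvelope (S : ∀ j, CSpace (X j)) (A : ∀ j, Set (X j))
    (k : ℝ) : Set (∀ j, X j) :=
  {z | (∑ j, relExt (S j) (A j) univ (z j)) < ((k : ℝ) : EReal)}

end Cross

/-!
Let `m < c` bound `ψ` on `A`. The normalisation `(ψ - m) / (c - m)` is a competitor in the
definition of `h_{A,X}`, and it tends to `1` at `∂X`, where `ψ = c`; since `h_{A,X} ≤ 1`, this
squeezes `h_{A,X}`. The competitor is plurisubharmonic once `ψ` is, that is, once adding
`ε ‖z‖ ^ 2` is known to preserve plurisubharmonicity. This holds because `‖z‖ ^ 2` is supported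
from below at each point `p` by the real part of the holomorphic function `2 ‖p‖ f - ‖p‖ ^ 2`,
where `f` is a norming functional of `p`: harmonic majorants on a disc can then be corrected by a
pluriharmonic function.
-/

section EReal

variable {k : ℝ}

lemma ereal_coe_mul_lt_top (hk : 0 < k) {t : EReal} (ht : t < ⊤) : (k : EReal) * t < ⊤ :=
  Ne.lt_top (by simp [EReal.mul_eq_top, hk, hk.not_gt, ht.ne])

lemma ereal_coe_mul_eq_bot_iff (hk : 0 < k) {t : EReal} : (k : EReal) * t = ⊥ ↔ t = ⊥ := by
  simp [EReal.mul_eq_bot, hk, hk.not_gt]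

lemma monotone_ereal_coe_mul (hk : 0 ≤ k) : Monotone fun t : EReal => (k : EReal) * t :=
  fun _ _ hst => mul_le_mul_of_nonneg_left hst (EReal.coe_nonneg.mpr hk)

lemma continuous_ereal_coe_mul (hk : k ≠ 0) : Continuous fun t : EReal => (k : EReal) * t := by
  have hk' : (k : EReal) ≠ 0 := by exact_mod_cast hk
  refine continuous_iff_continuousAt.mpr fun t => ?_
  exact (EReal.continuousAt_mul (p := (↑k, t)) (Or.inl hk') (Or.inl hk')
    (Or.inl (EReal.coe_ne_bot k)) (Or.inl (EReal.coe_ne_top k))).comp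
      (f := fun t : EReal => ((k : EReal), t)) (by fun_prop)

lemma continuous_ereal_add_coe (b : ℝ) : Continuous fun t : EReal => t + b := by
  refine continuous_iff_continuousAt.mpr fun t => ?_
  exact (EReal.continuousAt_add (p := (t, ↑b)) (Or.inr (EReal.coe_ne_bot b))
    (Or.inr (EReal.coe_ne_top b))).comp (f := fun t : EReal => (t, (b : EReal))) (by fun_prop)

variable {X : Type*} [TopologicalSpace X] {u : X → EReal} {Ω : Set X}

lemma upperSemicontinuousOn_ereal_coe_mul (hu : UpperSemicontinuousOn u Ω) (hk : 0 < k) :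
    UpperSemicontinuousOn (fun x => (k : EReal) * u x) Ω :=
  (continuous_ereal_coe_mul hk.ne').comp_upperSemicontinuousOn hu (monotone_ereal_coe_mul hk.le)

lemma upperSemicontinuousOn_ereal_add_coe {N : X → ℝ} (hu : UpperSemicontinuousOn u Ω)
    (hN : ContinuousOn N Ω) : UpperSemicontinuousOn (fun x => u x + N x) Ω := by
  have hN' : UpperSemicontinuousOn (fun x => (N x : EReal)) Ω :=
    (continuous_coe_real_ereal.comp_continuousOn hN).upperSemicontinuousOn
  exact hu.add' hN' fun x _ => EReal.continuousAt_add
    (Or.inr (EReal.coe_ne_bot _)) (Or.inr (EReal.coe_ne_top _))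

end EReal

section Subharmonic

variable {h : ℂ → ℝ} {u : ℂ → EReal} {Ω : Set ℂ}

lemma HarmonicOnCC.div_const (hh : HarmonicOnCC h Ω) (k : ℝ) :
    HarmonicOnCC (fun w => h w / k) Ω := by
  intro z hz
  obtain ⟨W, hW, hzW, hWΩ, f, hf, hhf⟩ := hh z hz
  refine ⟨W, hW, hzW, hWΩ, fun w => f w / (k : ℂ), hf.div_const _, fun w hw => ?_⟩
  simp only [hhf w hw, Complex.div_ofReal_re]

lemma HarmonicOnCC.sub_re {F : ℂ → ℂ} (hh : HarmonicOnCC h Ω) (hF : DifferentiableOn ℂ F Ω) :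
    HarmonicOnCC (fun w => h w - (F w).re) Ω := by
  intro z hz
  obtain ⟨W, hW, hzW, hWΩ, f, hf, hhf⟩ := hh z hz
  refine ⟨W, hW, hzW, hWΩ, fun w => f w - F w, hf.sub (hF.mono hWΩ), fun w hw => ?_⟩
  simp only [hhf w hw, Complex.sub_re]

lemma SubharmonicOnCC.mono {Ω' : Set ℂ} (hu : SubharmonicOnCC u Ω) (hΩ : Ω' ⊆ Ω) :
    SubharmonicOnCC u Ω' :=
  ⟨hu.1.mono hΩ, fun a r hr hball => hu.2 a r hr (hball.trans hΩ)⟩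

lemma SubharmonicOnCC.const_mul (hu : SubharmonicOnCC u Ω) {k : ℝ} (hk : 0 < k) :
    SubharmonicOnCC (fun w => (k : EReal) * u w) Ω := by
  refine ⟨upperSemicontinuousOn_ereal_coe_mul hu.1 hk, ?_⟩
  intro a r hr hball h hcont hharm hsphere z hz
  have mul_le_iff (w : ℂ) : (k : EReal) * u w ≤ h w ↔ u w ≤ (h w / k : ℝ) := by
    rw [EReal.coe_div, EReal.le_div_iff_mul_le (EReal.coe_pos.mpr hk) (EReal.coe_ne_top k),
      mul_comm]
  rw [mul_le_iff]
  exact hu.2 a r hr hball _ (hcont.div_const k) (hharm.div_const k)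
    (fun w hw => (mul_le_iff w).mp (hsphere w hw)) z hz

end Subharmonic

section HolomorphicSupport

variable {E : Type*} [NormedAddCommGroup E] [NormedSpace ℂ E] {N : E → ℝ} {Ω : Set E}

/-- `N` is supported from below on `Ω` by holomorphic functions: through each point of its graph
passes the real part of a function holomorphic on `Ω` that minorises `N`. For such `N`, a sum
`u + N` with `u` plurisubharmonic is again plurisubharmonic without recourse to Poisson
integrals. -/
def HolomorphicallySupportedOn (N : E → ℝ) (Ω : Set E) : Prop :=
  ∀ p ∈ Ω, ∃ F : E → ℂ, DifferentiableOn ℂ F Ω ∧ (F p).re = N p ∧ ∀ z ∈ Ω, (F z).re ≤ N z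

namespace HolomorphicallySupportedOn

lemma const (b : ℝ) (Ω : Set E) : HolomorphicallySupportedOn (fun _ => b) Ω :=
  fun _ _ => ⟨fun _ => b, differentiableOn_const _, Complex.ofReal_re b, fun _ _ => le_rfl⟩

lemma const_mul (hN : HolomorphicallySupportedOn N Ω) {ε : ℝ} (hε : 0 ≤ ε) :
    HolomorphicallySupportedOn (fun z => ε * N z) Ω := by
  intro p hp
  obtain ⟨F, hF, hFp, hFN⟩ := hN p hp
  refine ⟨fun z => (ε : ℂ) * F z, hF.const_mul _, ?_, fun z hz => ?_⟩
  · rw [Complex.re_ofReal_mul, hFp]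
  · rw [Complex.re_ofReal_mul]
    exact mul_le_mul_of_nonneg_left (hFN z hz) hε

lemma comp_line (hN : HolomorphicallySupportedOn N Ω) (a b : E) :
    HolomorphicallySupportedOn (fun w : ℂ => N (a + w • b)) {w | a + w • b ∈ Ω} := by
  intro w hw
  obtain ⟨F, hF, hFw, hFN⟩ := hN _ hw
  have hline : Differentiable ℂ fun w : ℂ => a + w • b := by fun_prop
  exact ⟨fun w => F (a + w • b), hF.comp hline.differentiableOn fun _ hv => hv, hFw,
    fun v hv => hFN _ hv⟩

lemma norm_sq (Ω : Set E) : HolomorphicallySupportedOn (fun z => ‖z‖ ^ 2) Ω := by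
  intro p _
  obtain ⟨f, hf_norm, hfp⟩ := exists_dual_vector'' ℂ p
  have hre (z : E) : (((2 * ‖p‖ : ℝ) : ℂ) * f z - ((‖p‖ ^ 2 : ℝ) : ℂ)).re
      = 2 * ‖p‖ * (f z).re - ‖p‖ ^ 2 := by
    rw [Complex.sub_re, Complex.re_ofReal_mul, Complex.ofReal_re]
  refine ⟨fun z => ((2 * ‖p‖ : ℝ) : ℂ) * f z - ((‖p‖ ^ 2 : ℝ) : ℂ), by fun_prop, ?_,
    fun z _ => ?_⟩
  · rw [hre, hfp]
    simp only [Complex.ofReal_re, Complex.coe_algebraMap]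
    ring
  · have hfz : (f z).re ≤ ‖z‖ :=
      (Complex.re_le_norm _).trans (f.le_of_opNorm_le_of_le hf_norm le_rfl |>.trans_eq (one_mul _))
    calc (((2 * ‖p‖ : ℝ) : ℂ) * f z - ((‖p‖ ^ 2 : ℝ) : ℂ)).re
        = 2 * ‖p‖ * (f z).re - ‖p‖ ^ 2 := hre z
      _ ≤ 2 * ‖p‖ * ‖z‖ - ‖p‖ ^ 2 := by gcongr
      _ ≤ ‖z‖ ^ 2 := by linarith [two_mul_le_add_sq ‖p‖ ‖z‖]

end HolomorphicallySupportedOn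

end HolomorphicSupport

lemma SubharmonicOnCC.add_of_holomorphicallySupportedOn {u : ℂ → EReal} {N : ℂ → ℝ} {Ω : Set ℂ}
    (hu : SubharmonicOnCC u Ω) (hN : ContinuousOn N Ω) (hsupp : HolomorphicallySupportedOn N Ω) :
    SubharmonicOnCC (fun w => u w + N w) Ω := by
  refine ⟨upperSemicontinuousOn_ereal_add_coe hu.1 hN, ?_⟩
  intro a r hr hball h hcont hharm hsphere z hz
  have add_le_iff (w : ℂ) : u w + N w ≤ h w ↔ u w ≤ (h w - N w : ℝ) := by
    rw [EReal.coe_sub, EReal.le_sub_iff_add_le (Or.inl (EReal.coe_ne_bot _))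
      (Or.inl (EReal.coe_ne_top _))]
  obtain ⟨F, hF, hFz, hFN⟩ := hsupp z (hball hz)
  have hle : u z ≤ (h z - (F z).re : ℝ) := by
    refine hu.2 a r hr hball (fun w => h w - (F w).re) ?_
      (hharm.sub_re (hF.mono (ball_subset_closedBall.trans hball))) (fun w hw => ?_) z hz
    · exact hcont.sub (Complex.continuous_re.comp_continuousOn (hF.continuousOn.mono hball))
    · have hFw : (F w).re ≤ N w := hFN w (hball (sphere_subset_closedBall hw))
      exact ((add_le_iff w).mp (hsphere w hw)).trans (EReal.coe_le_coe_iff.mpr (by linarith))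
  rwa [add_le_iff, ← hFz]

section PSHOnE

variable {E : Type*} [NormedAddCommGroup E] [NormedSpace ℂ E] {u : E → EReal} {Ω Ω' : Set E}

lemma PSHOnE.mono (hu : PSHOnE u Ω) (hΩ : Ω' ⊆ Ω) : PSHOnE u Ω' := by
  obtain ⟨hlt, husc, hbot, hline⟩ := hu
  refine ⟨fun z hz => hlt z (hΩ hz), husc.mono hΩ, ?_,
    fun a b => (hline a b).mono fun _ hw => hΩ hw⟩
  rintro ⟨U, hUΩ, hU⟩
  exact hbot ⟨U, hUΩ.trans hΩ, hU⟩

lemma PSHOnE.const_mul (hu : PSHOnE u Ω) {k : ℝ} (hk : 0 < k) :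
    PSHOnE (fun z => (k : EReal) * u z) Ω := by
  obtain ⟨hlt, husc, hbot, hline⟩ := hu
  refine ⟨fun z hz => ereal_coe_mul_lt_top hk (hlt z hz),
    upperSemicontinuousOn_ereal_coe_mul husc hk, ?_, fun a b => (hline a b).const_mul hk⟩
  rintro ⟨U, hUΩ, hU, hne, hUbot⟩
  exact hbot ⟨U, hUΩ, hU, hne, fun z hz => (ereal_coe_mul_eq_bot_iff hk).mp (hUbot z hz)⟩

lemma PSHOnE.add_of_holomorphicallySupportedOn {N : E → ℝ} (hu : PSHOnE u Ω)
    (hN : ContinuousOn N Ω) (hsupp : HolomorphicallySupportedOn N Ω) :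
    PSHOnE (fun z => u z + N z) Ω := by
  obtain ⟨hlt, husc, hbot, hline⟩ := hu
  refine ⟨fun z hz => EReal.add_lt_top (hlt z hz).ne (EReal.coe_ne_top _),
    upperSemicontinuousOn_ereal_add_coe husc hN, ?_, fun a b => ?_⟩
  · rintro ⟨U, hUΩ, hU, hne, hUbot⟩
    refine hbot ⟨U, hUΩ, hU, hne, fun z hz => ?_⟩
    simpa [EReal.add_eq_bot_iff] using hUbot z hz
  · have hcont : Continuous fun w : ℂ => a + w • b := by fun_prop
    exact (hline a b).add_of_holomorphicallySupportedOn
      (hN.comp hcont.continuousOn fun _ hw => hw) (hsupp.comp_line a b)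

lemma StronglyPSHOnE.mono {g : E → ℝ} (hg : StronglyPSHOnE g Ω) (hΩ' : IsOpen Ω') (hΩ : Ω' ⊆ Ω) :
    StronglyPSHOnE g Ω' := by
  intro x hx
  obtain ⟨ε, hε, U, hU, hxU, -, hpsh⟩ := hg x (hΩ hx)
  exact ⟨ε, hε, U ∩ Ω', hU.inter hΩ', ⟨hxU, hx⟩, inter_subset_right,
    hpsh.mono inter_subset_left⟩

lemma StronglyPSHOnE.exists_isOpen_pshOnE {g : E → ℝ} (hg : StronglyPSHOnE g Ω) {x : E}
    (hx : x ∈ Ω) : ∃ U, IsOpen U ∧ x ∈ U ∧ U ⊆ Ω ∧ PSHOnE (fun z => (g z : EReal)) U := by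
  obtain ⟨ε, hε, U, hU, hxU, hUΩ, hpsh⟩ := hg x hx
  refine ⟨U, hU, hxU, hUΩ, ?_⟩
  have hsum := hpsh.add_of_holomorphicallySupportedOn (N := fun z => ε * ‖z‖ ^ 2) (by fun_prop)
    ((HolomorphicallySupportedOn.norm_sq U).const_mul hε.le)
  simpa only [← EReal.coe_add, sub_add_cancel] using hsum

end PSHOnE

section Space

variable {X : Type*} [TopologicalSpace X] {S : CSpace X} {D : Set X}

lemma CChart.exists_isOpen_mem_iff (c : CChart X) (hD : IsOpen D) :
    ∃ V : Set c.E, IsOpen V ∧ ∀ y ∈ c.U, c.φ y ∈ V ↔ y ∈ D := by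
  obtain ⟨V, hV, himage⟩ := c.open_image (c.U ∩ D) inter_subset_left (c.openU.inter hD)
  refine ⟨V, hV, fun y hy => ⟨fun hyV => ?_, fun hyD => ?_⟩⟩
  · obtain ⟨y', ⟨hy'U, hy'D⟩, heq⟩ : c.φ y ∈ c.φ '' (c.U ∩ D) :=
      himage ▸ ⟨c.mapsToB y hy, hyV⟩
    exact c.injOn hy'U hy heq ▸ hy'D
  · exact (himage ▸ mem_image_of_mem c.φ ⟨hy, hyD⟩ : c.φ y ∈ c.B ∩ V).2

lemma SpaceRealAnalyticOn.continuousOn {f : X → ℝ} (hf : SpaceRealAnalyticOn S f D) :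
    ContinuousOn f D := by
  intro x hx
  obtain ⟨c, -, hxU, V, hV, -, hxV, -, g, hg, hgf⟩ := hf x hx
  have hφ : ContinuousAt c.φ x := c.contOn.continuousAt (c.openU.mem_nhds hxU)
  have hgφ : ContinuousAt (fun y => g (c.φ y)) x :=
    ContinuousAt.comp (f := c.φ) (hg _ hxV).continuousAt hφ
  refine (hgφ.congr ?_).continuousWithinAt
  filter_upwards [c.openU.mem_nhds hxU, hφ.eventually (hV.mem_nhds hxV)] with y hyU hyV
  exact hgf y hyU hyV

lemma SpaceStronglyPSHOn.mono {f : X → ℝ} {D' : Set X} (hf : SpaceStronglyPSHOn S f D)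
    (hD' : IsOpen D') (hD : D' ⊆ D) : SpaceStronglyPSHOn S f D' := by
  intro x hx
  obtain ⟨c, hc, hxU, V, hV, hVc, hxV, -, g, hg, hgf⟩ := hf x (hD hx)
  obtain ⟨W, hW, hWD'⟩ := c.exists_isOpen_mem_iff hD'
  exact ⟨c, hc, hxU, V ∩ W, hV.inter hW, inter_subset_left.trans hVc,
    ⟨hxV, (hWD' x hxU).mpr hx⟩, fun y hy => (hWD' y hy.1).mp hy.2.2, g,
    hg.mono (hV.inter hW) inter_subset_left, fun y hy hyV => hgf y hy hyV.1⟩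

lemma SpaceStronglyPSHOn.spacePSHOn {f : X → ℝ} (hf : SpaceStronglyPSHOn S f D) :
    SpacePSHOn S (fun x => (f x : EReal)) D := by
  refine ⟨fun x _ => EReal.coe_lt_top _, ?_, fun x hx => ?_⟩
  · rintro C ⟨⟨-, ⟨x, hx⟩, -⟩, -⟩
    exact ⟨x, hx, EReal.coe_ne_bot _⟩
  · obtain ⟨c, hc, hxU, V, -, hVc, hxV, hVD, g, hg, hgf⟩ := hf x hx
    obtain ⟨W, hW, hxW, hWV, hpsh⟩ := hg.exists_isOpen_pshOnE hxV
    exact ⟨c, hc, hxU, W, hW, hWV.trans hVc, hxW, fun y hy => hVD ⟨hy.1, hWV hy.2⟩,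
      fun z => (g z : EReal), hpsh, fun y hy hyW => congrArg _ (hgf y hy (hWV hyW))⟩

lemma SpacePSHOn.const_mul_add_const {u : X → EReal} (hu : SpacePSHOn S u D) {k : ℝ} (hk : 0 < k)
    (b : ℝ) : SpacePSHOn S (fun x => (k : EReal) * u x + b) D := by
  obtain ⟨hlt, hbot, hchart⟩ := hu
  refine ⟨fun x hx => ?_, fun C hC => ?_, fun x hx => ?_⟩
  · exact EReal.add_lt_top (ereal_coe_mul_lt_top hk (hlt x hx)).ne (EReal.coe_ne_top b)
  · obtain ⟨x, hx, hux⟩ := hbot C hC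
    exact ⟨x, hx, by simp [EReal.add_eq_bot_iff, ereal_coe_mul_eq_bot_iff hk, hux]⟩
  · obtain ⟨c, hc, hxU, V, hV, hVc, hxV, hVD, v, hv, hvu⟩ := hchart x hx
    exact ⟨c, hc, hxU, V, hV, hVc, hxV, hVD, fun z => (k : EReal) * v z + b,
      (hv.const_mul hk).add_of_holomorphicallySupportedOn continuousOn_const (.const b V),
      fun y hy hyV => by simp only [hvu y hy hyV]⟩

variable {A : Set X}

lemma le_relExtRaw {u : X → EReal} (hu : SpacePSHOn S u D) (hD : ∀ x ∈ D, u x ≤ 1)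
    (hA : ∀ x ∈ A, u x ≤ 0) (z : X) : u z ≤ relExtRaw S A D z :=
  le_iSup₂_of_le (f := fun (v : X → EReal) _ => v z) u ⟨hu, hD, hA⟩ le_rfl

lemma relExtRaw_le_one {z : X} (hz : z ∈ D) : relExtRaw S A D z ≤ 1 :=
  iSup₂_le fun _ hu => hu.2.1 z hz

lemma tendsto_relExtRaw_one_of_tendsto {u : X → EReal} (hu : SpacePSHOn S u D) {m M : ℝ}
    (hmM : m < M) (hD : ∀ x ∈ D, u x ≤ M) (hA : ∀ x ∈ A, u x ≤ m) {l : Filter X}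
    (hl : ∀ᶠ x in l, x ∈ D) (hlim : Tendsto u l (𝓝 M)) :
    Tendsto (relExtRaw S A D) l (𝓝 1) := by
  have hsub : 0 < M - m := sub_pos.mpr hmM
  let k : ℝ := (M - m)⁻¹
  let T : EReal → EReal := fun t => k * t + (-(k * m) : ℝ)
  have hk : 0 < k := inv_pos.mpr hsub
  have hT_mono : Monotone T := (monotone_ereal_coe_mul hk.le).add_const _
  have hT_cont : Continuous T :=
    (continuous_ereal_add_coe _).comp (continuous_ereal_coe_mul hk.ne')
  have hT_coe (t : ℝ) : T t = (k * (t - m) : ℝ) := by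
    rw [mul_sub, sub_eq_add_neg, EReal.coe_add, EReal.coe_mul]
  have hTM : T M = 1 := by rw [hT_coe, inv_mul_cancel₀ hsub.ne', EReal.coe_one]
  have hTm : T m = 0 := by rw [hT_coe, sub_self, mul_zero, EReal.coe_zero]
  have hT_lim : Tendsto (T ∘ u) l (𝓝 1) :=
    hTM ▸ (hT_cont.tendsto _).comp hlim
  have hT_le : ∀ x, (T ∘ u) x ≤ relExtRaw S A D x :=
    le_relExtRaw (hu.const_mul_add_const hk _) (fun x hx => hTM ▸ hT_mono (hD x hx))
      fun x hx => hTm ▸ hT_mono (hA x hx)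
  exact tendsto_of_tendsto_of_tendsto_of_le_of_le' hT_lim tendsto_const_nhds
    (Eventually.of_forall hT_le) (hl.mono fun _ => relExtRaw_le_one)

end Space

theorem relExtRaw_boundary_limit_general {Y : Type*} [TopologicalSpace Y] (S : CSpace Y)
    {ψ : Y → ℝ} (hψ : Continuous ψ) {c : ℝ}
    (hpsh : SpacePSHOn S (fun y => (ψ y : EReal)) {y | ψ y < c})
    {A : Set Y} {m : ℝ} (hm : m < c) (hA : ∀ y ∈ A, ψ y ≤ m) :
    ∀ x₀ ∈ frontier {y : Y | ψ y < c},
      Tendsto (relExtRaw S A {y : Y | ψ y < c}) (𝓝[{y : Y | ψ y < c}] x₀) (𝓝 (1 : EReal)) := by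
  intro x₀ hx₀
  have hψx₀ : ψ x₀ = c := frontier_lt_subset_eq hψ continuous_const hx₀
  have hlim : Tendsto (fun y => (ψ y : EReal)) (𝓝[{y | ψ y < c}] x₀) (𝓝 c) :=
    hψx₀ ▸ (continuous_coe_real_ereal.comp hψ).continuousWithinAt
  exact tendsto_relExtRaw_one_of_tendsto hpsh hm (fun y hy => EReal.coe_le_coe hy.le)
    (fun y hy => EReal.coe_le_coe (hA y hy)) self_mem_nhdsWithin hlim

/-- Proposition 2.13.  Let `Y` be an irreducible Stein space, `ψ` a
real analytic strongly plurisubharmonic exhaustion function, `X = {ψ < c}` and `A ⊆ X`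
relatively compact.  Then `h_{A,X}(x) → 1` as `X ∋ x → x₀` for every `x₀ ∈ ∂X`. -/
theorem relExtRaw_boundary_limit {Y : Type*} [TopologicalSpace Y] [T2Space Y]
    [SecondCountableTopology Y] (S : CSpace Y) (hirr : IsIrreducibleIn S univ)
    (hStein : IsSteinIn S univ) (ψ : Y → ℝ) (hψan : SpaceRealAnalyticOn S ψ univ)
    (hψpsh : SpaceStronglyPSHOn S ψ univ) (hψexh : IsExhaustionOn ψ univ) (c : ℝ)
    (A : Set Y) (hA : A ⊆ {y | ψ y < c}) (hArc : IsCompact (closure A))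
    (hAcl : closure A ⊆ {y | ψ y < c}) :
    ∀ x₀ ∈ frontier {y : Y | ψ y < c},
      Tendsto (relExtRaw S A {y : Y | ψ y < c}) (𝓝[{y : Y | ψ y < c}] x₀)
        (𝓝 (1 : EReal)) := by
  have hψ : Continuous ψ := continuousOn_univ.mp hψan.continuousOn
  obtain ⟨m, hm, hAm⟩ : ∃ m < c, ∀ y ∈ closure A, ψ y ≤ m :=
    IsCompact.exists_forall_le' (α := ℝᵒᵈ) hArc hψ.continuousOn hAcl
  exact relExtRaw_boundary_limit_general S hψ
    (hψpsh.mono (isOpen_lt hψ continuous_const) (subset_univ _)).spacePSHOn hm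
    fun y hy => hAm y (subset_closure hy)
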